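/- Let F : ℝ → ℝ be continuous and monotone non-decreasing, and let b be a real number. Define g(t) = ∫_t^b |F(ω) − F((t + b)/2)| dω for t < b. Then for every t < b, g is differentiable at t with derivative g'(t) = F(t) − F((t + b)/2). -/

import Mathlib

/-!
Split the integral at the midpoint `m = (s + b) / 2`. The two halves have equal length, so the two
constant terms `± F m` cancel and
`∫ ω in s..b, |F ω - F m| = 2 * (∫ ω in m..b, F ω) - ∫ ω in s..b, F ω`.
Only integrals of `F` remain, so the fundamental theorem of calculus applies although `F m` itself
need not be differentiable in `s`.
-/

open MeasureTheory Set

section MonotoneOn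

variable {F : ℝ → ℝ} {a b : ℝ}

lemma intervalIntegrable_of_monotoneOn_Icc (hab : a ≤ b) (hF : MonotoneOn F (Icc a b)) :
    IntervalIntegrable F volume a b :=
  MonotoneOn.intervalIntegrable (by rwa [uIcc_of_le hab])

lemma integral_abs_sub_left_of_monotoneOn (hab : a ≤ b) (hF : MonotoneOn F (Icc a b)) :
    ∫ x in a..b, |F x - F a| = (∫ x in a..b, F x) - (b - a) * F a := by
  have abs_eq : EqOn (fun x => |F x - F a|) (fun x => F x - F a) (uIcc a b) := by
    rw [uIcc_of_le hab]
    exact fun x hx => abs_of_nonneg (sub_nonneg.2 (hF (left_mem_Icc.2 hab) hx hx.1))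
  rw [intervalIntegral.integral_congr abs_eq,
    intervalIntegral.integral_sub (intervalIntegrable_of_monotoneOn_Icc hab hF)
      intervalIntegrable_const,
    intervalIntegral.integral_const, smul_eq_mul]

lemma integral_abs_sub_right_of_monotoneOn (hab : a ≤ b) (hF : MonotoneOn F (Icc a b)) :
    ∫ x in a..b, |F x - F b| = (b - a) * F b - ∫ x in a..b, F x := by
  have abs_eq : EqOn (fun x => |F x - F b|) (fun x => F b - F x) (uIcc a b) := by
    rw [uIcc_of_le hab]
    intro x hx
    exact (abs_sub_comm _ _).trans
      (abs_of_nonneg (sub_nonneg.2 (hF hx (right_mem_Icc.2 hab) hx.2)))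
  rw [intervalIntegral.integral_congr abs_eq,
    intervalIntegral.integral_sub intervalIntegrable_const
      (intervalIntegrable_of_monotoneOn_Icc hab hF),
    intervalIntegral.integral_const, smul_eq_mul]

lemma integral_abs_sub_of_monotoneOn {c : ℝ} (hF : MonotoneOn F (Icc a b)) (hc : c ∈ Icc a b) :
    ∫ x in a..b, |F x - F c| =
      (∫ x in c..b, F x) - (∫ x in a..c, F x) + (2 * c - a - b) * F c := by
  have hF_left : MonotoneOn F (Icc a c) := hF.mono (Icc_subset_Icc_right hc.2)
  have hF_right : MonotoneOn F (Icc c b) := hF.mono (Icc_subset_Icc_left hc.1)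
  have int_left : IntervalIntegrable (fun x => |F x - F c|) volume a c :=
    ((intervalIntegrable_of_monotoneOn_Icc hc.1 hF_left).sub intervalIntegrable_const).abs
  have int_right : IntervalIntegrable (fun x => |F x - F c|) volume c b :=
    ((intervalIntegrable_of_monotoneOn_Icc hc.2 hF_right).sub intervalIntegrable_const).abs
  rw [← intervalIntegral.integral_add_adjacent_intervals int_left int_right,
    integral_abs_sub_right_of_monotoneOn hc.1 hF_left,
    integral_abs_sub_left_of_monotoneOn hc.2 hF_right]
  ring

lemma integral_abs_sub_midpoint_of_monotoneOn (hab : a ≤ b) (hF : MonotoneOn F (Icc a b)) :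
    ∫ x in a..b, |F x - F ((a + b) / 2)| =
      2 * (∫ x in (a + b) / 2..b, F x) - ∫ x in a..b, F x := by
  have hm : (a + b) / 2 ∈ Icc a b := ⟨by linarith, by linarith⟩
  have int_left : IntervalIntegrable F volume a ((a + b) / 2) :=
    intervalIntegrable_of_monotoneOn_Icc hm.1 (hF.mono (Icc_subset_Icc_right hm.2))
  have int_right : IntervalIntegrable F volume ((a + b) / 2) b :=
    intervalIntegrable_of_monotoneOn_Icc hm.2 (hF.mono (Icc_subset_Icc_left hm.1))
  rw [integral_abs_sub_of_monotoneOn hF hm,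
    ← intervalIntegral.integral_add_adjacent_intervals int_left int_right]
  ring

lemma hasDerivAt_integral_left_of_monotoneOn {t : ℝ} (hF : MonotoneOn F (Icc a b))
    (ht : t ∈ Ioo a b) (hFt : ContinuousAt F t) :
    HasDerivAt (fun s => ∫ x in s..b, F x) (-F t) t :=
  intervalIntegral.integral_hasDerivAt_left
    (intervalIntegrable_of_monotoneOn_Icc ht.2.le (hF.mono (Icc_subset_Icc_left ht.1.le)))
    ⟨Icc a b, Icc_mem_nhds ht.1 ht.2, (hF.integrableOn_isCompact isCompact_Icc).1⟩ hFt

theorem hasDerivAt_wasserstein_piece_lower_endpoint_general {t : ℝ}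
    (hF : MonotoneOn F (Icc a b)) (ht : t ∈ Ioo a b)
    (hFt : ContinuousAt F t) (hFm : ContinuousAt F ((t + b) / 2)) :
    HasDerivAt (fun s => ∫ ω in s..b, |F ω - F ((s + b) / 2)|) (F t - F ((t + b) / 2)) t := by
  have hm : (t + b) / 2 ∈ Ioo a b := ⟨by linarith [ht.1, ht.2], by linarith [ht.2]⟩
  have deriv_midpoint : HasDerivAt (fun s => (s + b) / 2) (1 / 2) t :=
    ((hasDerivAt_id t).add_const b).div_const 2
  have deriv_upper_half : HasDerivAt (fun s => ∫ ω in (s + b) / 2..b, F ω)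
      (-F ((t + b) / 2) * (1 / 2)) t :=
    HasDerivAt.comp (h₂ := fun u => ∫ ω in u..b, F ω) t
      (hasDerivAt_integral_left_of_monotoneOn hF hm hFm) deriv_midpoint
  have deriv_split : HasDerivAt
      (fun s => 2 * (∫ ω in (s + b) / 2..b, F ω) - ∫ ω in s..b, F ω)
      (F t - F ((t + b) / 2)) t :=
    ((deriv_upper_half.const_mul 2).sub
      (hasDerivAt_integral_left_of_monotoneOn hF ht hFt)).congr_deriv (by ring)
  refine deriv_split.congr_of_eventuallyEq ?_
  filter_upwards [Ioo_mem_nhds ht.1 ht.2] with s hs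
  exact integral_abs_sub_midpoint_of_monotoneOn hs.2.le (hF.mono (Icc_subset_Icc_left hs.1.le))

end MonotoneOn

/-- For a continuous, monotone non-decreasing `F : ℝ → ℝ` and a real `b`,
the function `g t = ∫ ω in t..b, |F ω - F ((t + b)/2)|` is differentiable at every `t < b`,
with derivative `F t - F ((t + b)/2)`. -/
theorem hasDerivAt_wasserstein_piece_lower_endpoint
    (F : ℝ → ℝ) (hF : Continuous F) (hmono : Monotone F)
    (b t : ℝ) (ht : t < b) :
    HasDerivAt (fun s : ℝ => ∫ ω in s..b, |F ω - F ((s + b) / 2)|)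
      (F t - F ((t + b) / 2)) t :=
  hasDerivAt_wasserstein_piece_lower_endpoint_general (hmono.monotoneOn _)
    ⟨sub_one_lt t, ht⟩ hF.continuousAt hF.continuousAt
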